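/- arXiv:1507.08106 — 4 statements merged into one kernel-verified Lean document; each statement's English description precedes it below -/
import Mathlib

section
/- Let (X,S) be a non-degenerate symmetric set-theoretic solution with X finite which is not the trivial solution, assume the homomorphism φ : G(X,S) → Sym(X) ⋉ ℤ^X determined by φ(x) = (f_x⁻¹, t_x) is injective, and let m ≥ 1 and (θ_i)_{i ∈ X} be a family of elements of G(X,S) with φ(θ_i) = (id, m·t_i) for every i ∈ X. Then there exists i ∈ X such that the centralizer of θ_i in G(X,S) is a proper subgroup of G(X,S). -/
namespace YB

variable {X : Type*}

/-- `gmap S x y = g_x(y)`, the first component of `S (x, y)`. -/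
def gmap (S : X × X → X × X) (x y : X) : X := (S (x, y)).1

/-- `fmap S y x = f_y(x)`, the second component of `S (x, y)`. -/
def fmap (S : X × X → X × X) (y x : X) : X := (S (x, y)).2

/-- Non-degeneracy: each `f_x` and each `g_x` is bijective. -/
def Nondeg (S : X × X → X × X) : Prop :=
  ∀ x : X, Function.Bijective (fmap S x) ∧ Function.Bijective (gmap S x)

/-- Involutivity: `S ∘ S = id`. -/
def Involutive (S : X × X → X × X) : Prop := ∀ p : X × X, S (S p) = p

/-- `S` acting on the first two components of `X³`. -/
def S12 (S : X × X → X × X) : X × X × X → X × X × X :=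
  fun p => ((S (p.1, p.2.1)).1, (S (p.1, p.2.1)).2, p.2.2)

/-- `S` acting on the last two components of `X³`. -/
def S23 (S : X × X → X × X) : X × X × X → X × X × X :=
  fun p => (p.1, S (p.2.1, p.2.2))

/-- The braid relation `S¹² S²³ S¹² = S²³ S¹² S²³`. -/
def Braided (S : X × X → X × X) : Prop :=
  S12 S ∘ S23 S ∘ S12 S = S23 S ∘ S12 S ∘ S23 S

/-- The trivial solution: all `f_x` and `g_x` are the identity. -/
def IsTrivialSol (S : X × X → X × X) : Prop :=
  ∀ x : X, fmap S x = id ∧ gmap S x = id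

/-- The defining relators `x y (g_x(y) f_y(x))⁻¹` of the structure group. -/
def rels (S : X × X → X × X) : Set (FreeGroup X) :=
  {r | ∃ x y : X, r = FreeGroup.of x * FreeGroup.of y *
      (FreeGroup.of (gmap S x y) * FreeGroup.of (fmap S y x))⁻¹}

/-- The structure group `G(X,S) = ⟨X ∣ x y = g_x(y) f_y(x)⟩`. -/
abbrev StructureGroup (S : X × X → X × X) := PresentedGroup (rels S)

/-- A permutation `σ` of `X` acts on the free abelian group `ℤ^X` by permuting the
basis: `σ • t_x = t_{σ x}` (i.e. `(σ • w) i = w (σ⁻¹ i)`). -/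
def permAddAut (σ : Equiv.Perm X) : (X → ℤ) ≃+ (X → ℤ) where
  toFun w := w ∘ σ.symm
  invFun w := w ∘ σ
  left_inv w := by funext i; simp
  right_inv w := by funext i; simp
  map_add' a b := rfl

/-- The action of `Sym(X)` on `ℤ^X` (written multiplicatively) by permuting the basis,
as a homomorphism `Sym(X) →* Aut(ℤ^X)`. -/
def permHom : Equiv.Perm X →* MulAut (Multiplicative (X → ℤ)) where
  toFun σ := AddEquiv.toMultiplicative (permAddAut σ)
  map_one' := by apply MulEquiv.ext; intro w; rfl
  map_mul' σ τ := by apply MulEquiv.ext; intro w; rfl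

/-- The basis element `t_x` of `ℤ^X` (written multiplicatively). -/
def tvec [DecidableEq X] (x : X) : Multiplicative (X → ℤ) :=
  Multiplicative.ofAdd (Pi.single x 1)

/-- `f_x` as a permutation of `X` (given non-degeneracy). -/
noncomputable def fPerm (S : X × X → X × X) (hf : ∀ x : X, Function.Bijective (fmap S x))
    (x : X) : Equiv.Perm X :=
  Equiv.ofBijective _ (hf x)

/-- The element `f_x⁻¹ t_x` of `Sym(X) ⋉ ℤ^X`, the image of the generator `x` under the
homomorphism `φ` of Etingof–Schedler–Soloviev. -/
noncomputable def phiGen [DecidableEq X] (S : X × X → X × X)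
    (hf : ∀ x : X, Function.Bijective (fmap S x)) (x : X) :
    Multiplicative (X → ℤ) ⋊[permHom] Equiv.Perm X :=
  SemidirectProduct.inr (fPerm S hf x)⁻¹ * SemidirectProduct.inl (tvec x)

/-- Given `φ : G(X,S) → Sym(X) ⋉ ℤ^X`, `piMap φ g` is the `ℤ^X`-component `w` of
`φ g`, where `φ g = α · w` with `α ∈ Sym(X)`, `w ∈ ℤ^X`. -/
noncomputable def piMap {G : Type*} [Group G]
    (φ : G →* Multiplicative (X → ℤ) ⋊[permHom] Equiv.Perm X) (g : G) : X → ℤ :=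
  Multiplicative.toAdd (permHom ((φ g).right)⁻¹ ((φ g).left))

/-- If `(X,S)` is not the trivial solution, `φ : G(X,S) → Sym(X) ⋉ ℤ^X`
(with `φ(x) = f_x⁻¹ t_x`) is injective, `m ≥ 1`, and `θ_i` are elements with
`φ(θ_i) = (id, m·t_i)`, then some `θ_i` has centralizer a proper subgroup of
`G(X,S)`. -/
theorem exists_frozen_centralizer_ne_top {X : Type*} [Fintype X] [DecidableEq X]
    (S : X × X → X × X)
    (hSbij : Function.Bijective S) (hnd : Nondeg S) (hinv : Involutive S)
    (hbr : Braided S) (hnt : ¬ IsTrivialSol S)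
    (φ : StructureGroup S →* Multiplicative (X → ℤ) ⋊[permHom] Equiv.Perm X)
    (hφ : ∀ x : X, φ (PresentedGroup.of x) = phiGen S (fun x => (hnd x).1) x)
    (hφinj : Function.Injective φ)
    (m : ℕ) (hm : 1 ≤ m) (θ : X → StructureGroup S)
    (hθ : ∀ i : X, φ (θ i) =
      SemidirectProduct.inl (Multiplicative.ofAdd (m • Pi.single i (1 : ℤ)))) :
    ∃ i : X, Subgroup.centralizer {θ i} ≠ (⊤ : Subgroup (StructureGroup S)) := by
  by_contra hcon
  push Not at hcon
  have hfid : ∀ x i : X, fmap S x i = i := by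
    intro x i
    have h1 : (PresentedGroup.of x : StructureGroup S) ∈ Subgroup.centralizer {θ i} := by
      rw [hcon i]; trivial
    rw [Subgroup.mem_centralizer_singleton_iff] at h1
    have h2 := congrArg φ h1
    rw [map_mul, map_mul, hφ, hθ] at h2
    have h3 := congrArg (fun p => Multiplicative.toAdd p.left) h2
    simp only [phiGen, SemidirectProduct.mul_left, SemidirectProduct.left_inl,
      SemidirectProduct.left_inr, SemidirectProduct.right_inl, SemidirectProduct.right_inr,
      SemidirectProduct.mul_right, one_mul, map_one, mul_one, MulAut.one_apply] at h3
    have h4 := congrFun h3 i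
    have key : ∀ (σ : Equiv.Perm X) (w : X → ℤ),
        Multiplicative.toAdd (permHom σ⁻¹ (Multiplicative.ofAdd w)) i = w (σ i) :=
      fun _ _ => rfl
    rw [toAdd_mul, toAdd_mul, Pi.add_apply, Pi.add_apply, key, toAdd_ofAdd, add_comm] at h4
    have h5 := add_right_cancel h4
    by_contra hne
    have hne' : (fPerm S (fun x => (hnd x).1) x) i ≠ i := hne
    simp [hne'] at h5
    omega
  apply hnt
  intro x
  refine ⟨funext (hfid x), funext fun y => ?_⟩
  have h := hinv (x, y)
  have h2 : (S (S (x, y))).2 = y := by rw [h]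
  have h3 : fmap S (S (x, y)).2 (S (x, y)).1 = y := h2
  rw [hfid] at h3
  exact h3

end YB
end

section
/- Let (X,S) be a non-degenerate symmetric set-theoretic solution of the quantum Yang–Baxter equation with |X| = n ≥ 3, (X,S) not the trivial solution, and suppose all the permutations f_x (x ∈ X) are equal. Let K be the kernel of the augmentation homomorphism ε : G(X,S) → ℤ. Then the restriction of π to K is an injective group homomorphism whose image is the subgroup {w ∈ ℤ^X : the sum of the coordinates of w is 0}; in particular K is free abelian of rank n − 1, i.e. K ≅ ℤ^{n−1}. -/
namespace YB

variable {X : Type*}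

section helpers

variable {X : Type*} {G : Type*} [Group G] (o : X → G) (e : Equiv.Perm X)

/-- The set of elements `x⁻¹ y`. -/
def dset : Set G := {g | ∃ x y : X, g = (o x)⁻¹ * o y}

lemma d_eq (h : ∀ x y, o x * o y = o (e.symm y) * o (e x)) (x y : X) :
    o x * (o y)⁻¹ = (o (e.symm y))⁻¹ * o (e.symm x) := by
  have := h (e.symm y) x
  rw [Equiv.apply_symm_apply] at this
  rw [eq_inv_mul_iff_mul_eq, ← mul_assoc, this, mul_inv_cancel_right]

lemma d_comm (h : ∀ x y, o x * o y = o (e.symm y) * o (e x)) :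
    ∀ a ∈ dset o, ∀ b ∈ dset o, a * b = b * a := by
  rintro _ ⟨x, y, rfl⟩ _ ⟨z, w, rfl⟩
  have h1 : o (e.symm z) * o x = o (e.symm x) * o z := by
    rw [h (e.symm z) x, Equiv.apply_symm_apply]
  have h2 : o (e.symm y) * o w = o (e.symm w) * o y := by
    rw [h (e.symm y) w, Equiv.apply_symm_apply]
  calc (o x)⁻¹ * o y * ((o z)⁻¹ * o w)
      = (o x)⁻¹ * (o y * (o z)⁻¹) * o w := by group
    _ = (o (e.symm z) * o x)⁻¹ * (o (e.symm y) * o w) := by rw [d_eq o e h]; group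
    _ = (o z)⁻¹ * ((o (e.symm x))⁻¹ * o (e.symm w)) * o y := by rw [h1, h2]; group
    _ = _ := by rw [← d_eq o e h]; group

lemma d_conj (h : ∀ x y, o x * o y = o (e.symm y) * o (e x)) (z : X) :
    ∀ a ∈ dset o, o z * a * (o z)⁻¹ ∈ dset o := by
  rintro _ ⟨x, y, rfl⟩
  refine ⟨e.symm x, e.symm y, ?_⟩
  calc o z * ((o x)⁻¹ * o y) * (o z)⁻¹ = (o z * (o x)⁻¹) * (o y * (o z)⁻¹) := by group
    _ = _ := by rw [d_eq o e h, d_eq o e h]; group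

lemma d_conj' (h : ∀ x y, o x * o y = o (e.symm y) * o (e x)) (z : X) :
    ∀ a ∈ dset o, (o z)⁻¹ * a * o z ∈ dset o := by
  rintro _ ⟨x, y, rfl⟩
  refine ⟨e x, e y, ?_⟩
  calc (o z)⁻¹ * ((o x)⁻¹ * o y) * o z = (o x * o z)⁻¹ * (o y * o z) := by group
    _ = _ := by rw [h x z, h y z]; group

lemma exists_hom [Fintype X] [DecidableEq X] {D : Type*} [CommGroup D] (a : X → D) :
    ∃ s : Multiplicative (X → ℤ) →* D,
      (∀ x, s (tvec x) = a x) ∧ ∀ w, s w = ∏ x, a x ^ (Multiplicative.toAdd w x) := by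
  refine ⟨{ toFun := fun w => ∏ x, a x ^ (Multiplicative.toAdd w x)
            map_one' := by simp
            map_mul' := by intro v w; simp [zpow_add, Finset.prod_mul_distrib] }, ?_, fun w => rfl⟩
  intro x
  simp only [MonoidHom.coe_mk, OneHom.coe_mk, tvec, toAdd_ofAdd]
  rw [Finset.prod_eq_single x]
  · simp
  · intro b _ hb; simp [hb]
  · simp

lemma fin_equiv [Fintype X] [DecidableEq X] (x0 : X) (K : Type*) [Group K]
    (p : K →* Multiplicative (X → ℤ)) (hp : Function.Injective p)
    (hr : ∀ w : X → ℤ, (∃ k, p k = Multiplicative.ofAdd w) ↔ ∑ x, w x = 0) :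
    Nonempty (K ≃* Multiplicative (Fin (Nat.card X - 1) → ℤ)) := by
  have hc : Fintype.card {x : X // x ≠ x0} = Nat.card X - 1 := by
    rw [Nat.card_eq_fintype_card, Fintype.card_subtype_compl, Fintype.card_subtype_eq]
  let E : Fin (Nat.card X - 1) ≃ {x : X // x ≠ x0} := (Fintype.equivFinOfCardEq hc).symm
  let q : K →* Multiplicative (Fin (Nat.card X - 1) → ℤ) :=
    { toFun := fun k => Multiplicative.ofAdd fun i => Multiplicative.toAdd (p k) (E i)
      map_one' := by ext; simp
      map_mul' := by intro a b; ext; simp }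
  have hsplit : ∀ w : X → ℤ, ∑ x, w x = w x0 + ∑ i, w (E i) := by
    intro w
    rw [Fintype.sum_eq_add_sum_subtype_ne w x0,
      E.sum_comp (fun y : {x : X // x ≠ x0} => w y)]
  refine ⟨MulEquiv.ofBijective q ⟨?_, ?_⟩⟩
  · rw [injective_iff_map_eq_one]
    intro k hk
    have h0 : ∀ i, Multiplicative.toAdd (p k) (E i) = 0 := fun i => congrFun hk i
    have hs := (hr (Multiplicative.toAdd (p k))).1 ⟨k, rfl⟩
    rw [hsplit] at hs
    simp only [h0, Finset.sum_const_zero, add_zero] at hs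
    apply hp
    rw [map_one]
    apply Multiplicative.toAdd.injective
    funext x
    by_cases hx : x = x0
    · subst hx; exact hs
    · have := h0 (E.symm ⟨x, hx⟩)
      rw [Equiv.apply_symm_apply] at this
      exact this
  · intro v
    let w : X → ℤ := fun x => if hx : x = x0 then - ∑ i, Multiplicative.toAdd v i
      else Multiplicative.toAdd v (E.symm ⟨x, hx⟩)
    have hw : ∀ i, w (E i) = Multiplicative.toAdd v i := by
      intro i
      simp only [w]
      rw [dif_neg (E i).2]
      simp
    obtain ⟨k, hk⟩ := (hr w).2 (by rw [hsplit]; simp only [hw]; simp [w])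
    refine ⟨k, ?_⟩
    apply Multiplicative.toAdd.injective
    funext i
    change Multiplicative.toAdd (p k) (E i) = _
    rw [hk]
    exact hw i

end helpers

/-- For a non-trivial solution with `|X| = n ≥ 3` in which all the
permutations `f_x` are equal, the restriction of `π` to `K = ker ε` is an injective
group homomorphism whose image is `{w ∈ ℤ^X : Σ w = 0}`; in particular
`K ≅ ℤ^{n-1}`. -/
theorem ker_aug_free_abelian {X : Type*} [Fintype X] [DecidableEq X]
    (S : X × X → X × X)
    (hSbij : Function.Bijective S) (hnd : Nondeg S) (hinv : Involutive S)
    (hbr : Braided S) (hnt : ¬ IsTrivialSol S) (hcard : 3 ≤ Nat.card X)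
    (hfeq : ∀ x y : X, fmap S x = fmap S y)
    (φ : StructureGroup S →* Multiplicative (X → ℤ) ⋊[permHom] Equiv.Perm X)
    (hφ : ∀ x : X, φ (PresentedGroup.of x) = phiGen S (fun x => (hnd x).1) x)
    (ε : StructureGroup S →* Multiplicative ℤ)
    (hε : ∀ x : X, ε (PresentedGroup.of x) = Multiplicative.ofAdd 1) :
    (∀ a b : StructureGroup S, a ∈ ε.ker → b ∈ ε.ker →
        piMap φ (a * b) = piMap φ a + piMap φ b) ∧
    Set.InjOn (piMap φ) (ε.ker : Set (StructureGroup S)) ∧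
    piMap φ '' (ε.ker : Set (StructureGroup S)) = {w : X → ℤ | ∑ x : X, w x = 0} ∧
    Nonempty (ε.ker ≃* Multiplicative (Fin (Nat.card X - 1) → ℤ)) := by
  classical
  obtain ⟨x0⟩ : Nonempty X := by
    by_contra hne
    rw [not_nonempty_iff] at hne
    simp at hcard
  let e : Equiv.Perm X := fPerm S (fun x => (hnd x).1) x0
  have he : ∀ x, fPerm S (fun x => (hnd x).1) x = e := by
    intro x
    ext z
    exact congrFun (hfeq x x0) z
  have hf : ∀ y x, fmap S y x = e x := fun y x => congrFun (hfeq y x0) x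
  have hg : ∀ x y, gmap S x y = e.symm y := by
    intro x y
    rw [Equiv.eq_symm_apply, ← hf (fmap S y x)]
    exact congrArg Prod.snd (hinv (x, y))
  let o : X → StructureGroup S := fun x => PresentedGroup.of x
  have hrel : ∀ x y, o x * o y = o (e.symm y) * o (e x) := by
    intro x y
    have : (PresentedGroup.mk (rels S)) (FreeGroup.of x * FreeGroup.of y *
      (FreeGroup.of (gmap S x y) * FreeGroup.of (fmap S y x))⁻¹) = 1 :=
      PresentedGroup.one_of_mem ⟨x, y, rfl⟩
    rw [hf, hg, map_mul, map_inv, mul_inv_eq_one, map_mul, map_mul] at this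
    exact this
  let D : Subgroup (StructureGroup S) := Subgroup.closure (dset o)
  have hTconj : ∀ g : StructureGroup S, ∀ t ∈ dset o, g * t * g⁻¹ ∈ dset o := by
    intro g
    induction g using PresentedGroup.induction_on with
    | _ z =>
      induction z using FreeGroup.induction_on with
      | C1 => intro t ht; simpa using ht
      | of x => exact d_conj o e hrel x
      | inv_of x _ =>
        intro t ht
        have := d_conj' o e hrel x t ht
        rw [map_inv, inv_inv]
        exact this
      | mul a b ha hb =>
        intro t ht
        have := ha _ (hb t ht)
        rw [map_mul]
        convert this using 1
        group
  have hDn : D.Normal := by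
    refine ⟨fun n hn g => ?_⟩
    induction hn using Subgroup.closure_induction with
    | mem t ht => exact Subgroup.subset_closure (hTconj g t ht)
    | one => simp [D.one_mem]
    | mul a b _ _ ha hb =>
      have := D.mul_mem ha hb
      convert this using 1
      group
    | inv a _ ha =>
      have := D.inv_mem ha
      convert this using 1
      group
  have hKD : ∀ g, ε g = 1 → g ∈ D := by
    intro g hg1
    have hh : QuotientGroup.mk' D = (zpowersHom _ (QuotientGroup.mk' D (o x0))).comp ε := by
      apply PresentedGroup.ext
      intro x
      simp only [MonoidHom.comp_apply, hε, zpowersHom_apply, toAdd_ofAdd, zpow_one]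
      symm
      rw [QuotientGroup.mk'_apply, QuotientGroup.mk'_apply, QuotientGroup.eq]
      exact Subgroup.subset_closure ⟨x0, x, rfl⟩
    have := DFunLike.congr_fun hh g
    rw [MonoidHom.comp_apply, hg1, map_one] at this
    rwa [QuotientGroup.mk'_apply, QuotientGroup.eq_one_iff] at this
  have hφd : ∀ x y, φ ((o x)⁻¹ * o y) = SemidirectProduct.inl ((tvec x)⁻¹ * tvec y) := by
    intro x y
    rw [map_mul, map_inv, hφ, hφ, phiGen, phiGen, he, he, map_mul, map_inv, mul_inv_rev, mul_assoc,
      inv_mul_cancel_left, ← map_inv SemidirectProduct.inl]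
  have hεd : ∀ x y, ε ((o x)⁻¹ * o y) = 1 := by
    intro x y
    rw [map_mul, map_inv, hε, hε, inv_mul_cancel]
  have hφr : ∀ g ∈ D, (φ g).right = 1 := by
    intro g hgD
    have : D ≤ (SemidirectProduct.rightHom.comp φ).ker := by
      rw [Subgroup.closure_le]
      rintro _ ⟨x, y, rfl⟩
      simp only [SetLike.mem_coe, MonoidHom.mem_ker, MonoidHom.comp_apply, hφd,
        SemidirectProduct.rightHom_inl]
    exact this hgD
  have hDK : D ≤ ε.ker := by
    rw [Subgroup.closure_le]
    rintro _ ⟨x, y, rfl⟩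
    exact hεd x y
  have hπ : ∀ g ∈ D, piMap φ g = Multiplicative.toAdd (φ g).left := by
    intro g hgD
    rw [piMap, hφr g hgD, inv_one, map_one]
    rfl
  have hmul : ∀ a ∈ D, ∀ b ∈ D, (φ (a * b)).left = (φ a).left * (φ b).left := by
    intro a ha b hb
    rw [map_mul, SemidirectProduct.mul_left, hφr a ha, map_one]
    rfl
  let P : D →* Multiplicative (X → ℤ) :=
    { toFun := fun g => (φ g).left
      map_one' := by simp
      map_mul' := fun a b => hmul a a.2 b b.2 }
  have hDc : IsMulCommutative D := Subgroup.isMulCommutative_closure (d_comm o e hrel)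
  let _ : CommGroup D := { (inferInstance : Group D) with mul_comm := hDc.is_comm.comm }
  let a : X → D := fun x => ⟨(o x0)⁻¹ * o x, Subgroup.subset_closure ⟨x0, x, rfl⟩⟩
  obtain ⟨s, hs, hs'⟩ := exists_hom a
  have hPd : ∀ x y h, P ⟨(o x)⁻¹ * o y, h⟩ = (tvec x)⁻¹ * tvec y := by
    intro x y h
    change (φ ((o x)⁻¹ * o y)).left = _
    rw [hφd]
    rfl
  have hsP : ∀ g : D, s (P g) = g := by
    rintro ⟨g, hgD⟩
    induction hgD using Subgroup.closure_induction with
    | mem t ht =>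
      obtain ⟨x, y, rfl⟩ := ht
      rw [hPd, map_mul, map_inv, hs, hs]
      apply Subtype.ext
      change ((o x0)⁻¹ * o x)⁻¹ * ((o x0)⁻¹ * o y) = (o x)⁻¹ * o y
      group
    | one => 
      change s (P 1) = 1
      rw [map_one, map_one]
    | mul u v hu hv iu iv =>
      change s (P (⟨u, hu⟩ * ⟨v, hv⟩)) = ⟨u, hu⟩ * ⟨v, hv⟩
      rw [map_mul, map_mul, iu, iv]
    | inv u hu iu =>
      change s (P (⟨u, hu⟩⁻¹)) = (⟨u, hu⟩ : D)⁻¹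
      rw [map_inv, map_inv, iu]
  have hPinj : Function.Injective P := Function.LeftInverse.injective hsP
  have hPsum : ∀ g : D, ∑ x, Multiplicative.toAdd (P g) x = 0 := by
    rintro ⟨g, hgD⟩
    induction hgD using Subgroup.closure_induction with
    | mem t ht =>
      obtain ⟨x, y, rfl⟩ := ht
      rw [hPd]
      simp [tvec, Finset.sum_add_distrib]
    | one => 
      change ∑ x, Multiplicative.toAdd (P 1) x = 0
      rw [map_one]
      simp
    | mul u v hu hv iu iv =>
      change ∑ x, Multiplicative.toAdd (P (⟨u, hu⟩ * ⟨v, hv⟩)) x = 0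
      rw [map_mul]
      simp only [toAdd_mul, Pi.add_apply, Finset.sum_add_distrib, iu, iv, add_zero]
    | inv u hu iu =>
      change ∑ x, Multiplicative.toAdd (P (⟨u, hu⟩⁻¹)) x = 0
      rw [map_inv]
      simp only [toAdd_inv, Pi.neg_apply, Finset.sum_neg_distrib, iu, neg_zero]
  have hPs : ∀ w : X → ℤ, ∑ x, w x = 0 →
      P (s (Multiplicative.ofAdd w)) = Multiplicative.ofAdd w := by
    intro w hw
    rw [hs', map_prod]
    have : ∀ x, P (a x ^ (Multiplicative.toAdd (Multiplicative.ofAdd w) x))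
        = ((tvec x0)⁻¹ * tvec x) ^ w x := by
      intro x
      rw [map_zpow]
      congr 1
      exact hPd x0 x _
    simp only [this]
    apply Multiplicative.toAdd.injective
    funext z
    simp only [toAdd_prod, toAdd_zpow, toAdd_mul, toAdd_inv, tvec, toAdd_ofAdd, Finset.sum_apply,
      Pi.smul_apply, Pi.add_apply, Pi.neg_apply, smul_eq_mul, mul_add, Finset.sum_add_distrib,
      ← Finset.sum_mul, hw, zero_mul, zero_add]
    simp [Pi.single_apply]
  have hrange : ∀ w : X → ℤ, (∃ k, P k = Multiplicative.ofAdd w) ↔ ∑ x, w x = 0 := by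
    intro w
    constructor
    · rintro ⟨k, hk⟩
      have := hPsum k
      rw [hk] at this
      exact this
    · intro hw
      exact ⟨_, hPs w hw⟩
  have hKeq : ε.ker = D := le_antisymm (fun g hg => hKD g hg) hDK
  rw [hKeq]
  refine ⟨?_, ?_, ?_, ?_⟩
  · intro u v hu hv
    rw [hπ _ (D.mul_mem hu hv), hπ _ hu, hπ _ hv, hmul _ hu _ hv]
    rfl
  · intro u hu v hv huv
    rw [hπ _ hu, hπ _ hv] at huv
    have := @hPinj ⟨u, hu⟩ ⟨v, hv⟩ (Multiplicative.toAdd.injective huv)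
    exact congrArg Subtype.val this
  · ext w
    rw [Set.mem_ofPred_eq, ← hrange]
    constructor
    · rintro ⟨g, hgD, rfl⟩
      refine ⟨⟨g, hgD⟩, ?_⟩
      rw [hπ g hgD]
      rfl
    · rintro ⟨k, hk⟩
      refine ⟨k, k.2, ?_⟩
      rw [hπ _ k.2]
      exact congrArg Multiplicative.toAdd hk
  · exact fin_equiv x0 D P hPinj hrange

end YB
end

section
/- Let (X,S) be a non-degenerate symmetric set-theoretic solution of the quantum Yang–Baxter equation with X finite. Then the assignment x ↦ (f_x⁻¹, t_x) extends to a well-defined group homomorphism φ : G(X,S) → Sym(X) ⋉ ℤ^X (it respects all the defining relations x y = g_x(y) f_y(x)), and φ is injective. -/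
namespace YB

variable {X : Type*}

/-- Product of the generators of a list, read from right to left. -/
def word (S : X × X → X × X) : List X → StructureGroup S
  | [] => 1
  | x :: l => word S l * PresentedGroup.of x

theorem of_mul_of (S : X × X → X × X) (x y : X) :
    (PresentedGroup.of x * PresentedGroup.of y : StructureGroup S) =
      PresentedGroup.of (gmap S x y) * PresentedGroup.of (fmap S y x) := by
  have h : PresentedGroup.mk (rels S) (FreeGroup.of x * FreeGroup.of y *
      (FreeGroup.of (gmap S x y) * FreeGroup.of (fmap S y x))⁻¹) = 1 :=
    PresentedGroup.one_of_mem ⟨x, y, rfl⟩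
  rw [map_mul, map_inv, mul_inv_eq_one, map_mul, map_mul] at h
  exact h

theorem word_append (S : X × X → X × X) (a b : List X) :
    word S (a ++ b) = word S b * word S a := by
  induction a with
  | nil => simp [word]
  | cons x a ih => simp [word, ih, mul_assoc]

theorem ore_word (S : X × X → X × X) (hnd : Nondeg S) (x : X) (b : List X) :
    ∃ (z : X) (b' : List X), (PresentedGroup.of x : StructureGroup S) * word S b' =
      word S b * PresentedGroup.of z := by
  induction b with
  | nil => exact ⟨x, [], by simp [word]⟩
  | cons y m ih =>
    obtain ⟨u, m', h⟩ := ih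
    obtain ⟨z, hz⟩ := (hnd y).2.2 u
    refine ⟨z, fmap S z y :: m', ?_⟩
    simp only [word]
    rw [← mul_assoc, h, mul_assoc, mul_assoc, of_mul_of S y z, hz]

theorem exists_word (S : X × X → X × X) (hnd : Nondeg S) (g : StructureGroup S) :
    ∃ a b : List X, g = word S a * (word S b)⁻¹ := by
  have hg : g ∈ Subgroup.closure (Set.range (PresentedGroup.of (rels := rels S))) := by
    rw [PresentedGroup.closure_range_of]; trivial
  induction hg using Subgroup.closure_induction_right with
  | one => exact ⟨[], [], by simp [word]⟩
  | mul_right g _ y hy ih =>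
    obtain ⟨x, rfl⟩ := hy
    obtain ⟨a, b, rfl⟩ := ih
    obtain ⟨z, b', h⟩ := ore_word S hnd x b
    refine ⟨z :: a, b', ?_⟩
    simp only [word]
    rw [eq_mul_inv_iff_mul_eq, mul_assoc, h]
    group
  | mul_inv_cancel g _ y hy ih =>
    obtain ⟨x, rfl⟩ := hy
    obtain ⟨a, b, rfl⟩ := ih
    refine ⟨a, b ++ [x], ?_⟩
    rw [word_append]
    simp [word, mul_assoc]

theorem phiGen_mul [DecidableEq X] (S : X × X → X × X)
    (hnd : Nondeg S) (hinv : Involutive S) (hbr : Braided S) (x y : X) :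
    phiGen S (fun x => (hnd x).1) x * phiGen S (fun x => (hnd x).1) y =
    phiGen S (fun x => (hnd x).1) (gmap S x y) * phiGen S (fun x => (hnd x).1) (fmap S y x) := by
  set F := fPerm S (fun x => (hnd x).1) with hF
  have key : ∀ a b : X, phiGen S (fun x => (hnd x).1) a * phiGen S (fun x => (hnd x).1) b =
      SemidirectProduct.inr (F b * F a)⁻¹ *
        SemidirectProduct.inl (tvec (F b a) * tvec b) := by
    intro a b
    have h : permHom (F b) (tvec a) = tvec (F b a) := by
      apply Multiplicative.toAdd.injective
      funext i
      change (Pi.single a 1 : X → ℤ) ((F b).symm i) = (Pi.single (F b a) 1 : X → ℤ) i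
      simp only [Pi.single_apply, Equiv.symm_apply_eq]
    have h2 := SemidirectProduct.inl_aut (φ := permHom (X := X)) (F b) (tvec a)
    rw [h] at h2
    rw [map_mul SemidirectProduct.inl, h2]
    simp only [phiGen, ← hF, mul_inv_rev, map_mul, map_inv]
    group
  rw [key, key]
  have e1 : F (fmap S y x) (gmap S x y) = y := congrArg Prod.snd (hinv (x, y))
  have e2 : F y x = fmap S y x := rfl
  have e3 : F y * F x = F (fmap S y x) * F (gmap S x y) := by
    ext a
    exact congrArg (fun p => p.2.2) (congrFun hbr (a, x, y))
  rw [e1, e2, e3, mul_comm (tvec y)]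

theorem piMap_mul [DecidableEq X] (S : X × X → X × X) (hf : ∀ x : X, Function.Bijective (fmap S x))
    (φ : StructureGroup S →* Multiplicative (X → ℤ) ⋊[permHom] Equiv.Perm X)
    (hφ : ∀ x : X, φ (PresentedGroup.of x) = phiGen S hf x) (g : StructureGroup S) (x i : X) :
    piMap φ (g * PresentedGroup.of x) i =
      piMap φ g ((fPerm S hf x).symm i) + (Pi.single x 1 : X → ℤ) i := by
  have h : permHom ((φ (g * PresentedGroup.of x)).right)⁻¹ ((φ (g * PresentedGroup.of x)).left)
      = permHom (fPerm S hf x) (permHom ((φ g).right)⁻¹ ((φ g).left)) * tvec x := by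
    rw [map_mul, hφ]
    simp [phiGen]
  unfold piMap
  rw [h]
  rfl

theorem piMap_nonneg [DecidableEq X] (S : X × X → X × X)
    (hf : ∀ x : X, Function.Bijective (fmap S x))
    (φ : StructureGroup S →* Multiplicative (X → ℤ) ⋊[permHom] Equiv.Perm X)
    (hφ : ∀ x : X, φ (PresentedGroup.of x) = phiGen S hf x) (l : List X) (i : X) :
    0 ≤ piMap φ (word S l) i := by
  induction l generalizing i with
  | nil => simp [word, piMap]
  | cons x l ih =>
    rw [word, piMap_mul S hf φ hφ, Pi.single_apply]
    have := ih ((fPerm S hf x).symm i)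
    split_ifs <;> omega

theorem piMap_pos [DecidableEq X] (S : X × X → X × X)
    (hf : ∀ x : X, Function.Bijective (fmap S x))
    (φ : StructureGroup S →* Multiplicative (X → ℤ) ⋊[permHom] Equiv.Perm X)
    (hφ : ∀ x : X, φ (PresentedGroup.of x) = phiGen S hf x) (l : List X) (x : X) :
    0 < piMap φ (word S (x :: l)) x := by
  rw [word, piMap_mul S hf φ hφ, Pi.single_eq_same]
  have := piMap_nonneg S hf φ hφ l ((fPerm S hf x).symm x)
  omega

theorem extract [DecidableEq X] (S : X × X → X × X)
    (hf : ∀ x : X, Function.Bijective (fmap S x))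
    (φ : StructureGroup S →* Multiplicative (X → ℤ) ⋊[permHom] Equiv.Perm X)
    (hφ : ∀ x : X, φ (PresentedGroup.of x) = phiGen S hf x) (l : List X) (y : X)
    (h : 0 < piMap φ (word S l) y) : ∃ l', word S l = word S l' * PresentedGroup.of y := by
  induction l generalizing y with
  | nil => simp [word, piMap] at h
  | cons x m ih =>
    by_cases hxy : y = x
    · exact ⟨m, by rw [hxy, word]⟩
    · rw [word, piMap_mul S hf φ hφ, Pi.single_eq_of_ne hxy, add_zero] at h
      obtain ⟨m', hm⟩ := ih _ h
      set z := (fPerm S hf x).symm y with hz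
      have hy : fmap S x z = y := (fPerm S hf x).apply_symm_apply y
      refine ⟨gmap S z x :: m', ?_⟩
      simp only [word]
      rw [hm, mul_assoc, of_mul_of S z x, hy, mul_assoc]

theorem word_inj [DecidableEq X] (S : X × X → X × X)
    (hf : ∀ x : X, Function.Bijective (fmap S x))
    (φ : StructureGroup S →* Multiplicative (X → ℤ) ⋊[permHom] Equiv.Perm X)
    (hφ : ∀ x : X, φ (PresentedGroup.of x) = phiGen S hf x) (a b : List X)
    (h : φ (word S a) = φ (word S b)) : word S a = word S b := by
  induction b generalizing a with
  | nil =>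
    cases a with
    | nil => rfl
    | cons x m =>
      have := piMap_pos S hf φ hφ m x
      rw [piMap, h] at this
      simp [word] at this
  | cons y m ih =>
    have hp := piMap_pos S hf φ hφ m y
    rw [piMap, ← h] at hp
    obtain ⟨a', ha⟩ := extract S hf φ hφ a y hp
    rw [ha, word, map_mul, map_mul] at h
    rw [ha, word, ih a' (mul_right_cancel h)]

/-- The assignment `x ↦ (f_x⁻¹, t_x)` extends to a well-defined group
homomorphism `φ : G(X,S) → Sym(X) ⋉ ℤ^X` (i.e. it respects the defining relations), and
`φ` is injective. -/
theorem phi_exists_injective {X : Type*} [Fintype X] [DecidableEq X]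
    (S : X × X → X × X)
    (hSbij : Function.Bijective S) (hnd : Nondeg S) (hinv : Involutive S)
    (hbr : Braided S) :
    ∃ φ : StructureGroup S →* Multiplicative (X → ℤ) ⋊[permHom] Equiv.Perm X,
      (∀ x : X, φ (PresentedGroup.of x) = phiGen S (fun x => (hnd x).1) x) ∧
      Function.Injective φ := by
  have hlift : ∀ r ∈ rels S, FreeGroup.lift (phiGen S (fun x => (hnd x).1)) r = 1 := by
    rintro r ⟨x, y, rfl⟩
    rw [map_mul, map_inv, mul_inv_eq_one, map_mul, map_mul]
    simp only [FreeGroup.lift_apply_of]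
    exact phiGen_mul S hnd hinv hbr x y
  have hφ : ∀ x : X, PresentedGroup.toGroup hlift (PresentedGroup.of x) =
      phiGen S (fun x => (hnd x).1) x := fun x => PresentedGroup.toGroup.of hlift
  refine ⟨PresentedGroup.toGroup hlift, hφ, ?_⟩
  rw [injective_iff_map_eq_one]
  intro g hg
  obtain ⟨a, b, rfl⟩ := exists_word S hnd g
  rw [map_mul, map_inv, mul_inv_eq_one] at hg
  rw [mul_inv_eq_one]
  exact word_inj S _ _ hφ a b hg

end YB
end

section
/- Let (X,S) be a non-degenerate symmetric set-theoretic solution of the quantum Yang–Baxter equation with X finite. Then the map π : G(X,S) → ℤ^X is a bijection, and it satisfies the cocycle identity π(a₁ a₂) = σ(a₂⁻¹)(π(a₁)) + π(a₂) for all a₁, a₂ ∈ G(X,S), where σ(g) ∈ Sym(X) denotes the Sym(X)-component of φ(g) acting on ℤ^X by permuting the basis. -/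
namespace YB

variable {X : Type*}

theorem piMap_apply {G : Type*} [Group G]
    (φ : G →* Multiplicative (X → ℤ) ⋊[permHom] Equiv.Perm X) (g : G) (i : X) :
    piMap φ g i = Multiplicative.toAdd (φ g).left ((φ g).right i) := rfl

theorem toAdd_mul_left (p q : Multiplicative (X → ℤ) ⋊[permHom] Equiv.Perm X) (i : X) :
    Multiplicative.toAdd (p * q).left i = Multiplicative.toAdd p.left i +
      Multiplicative.toAdd q.left (p.right.symm i) := rfl

/-- The cocycle identity. -/
theorem piMap_mul_s19 {G : Type*} [Group G]
    (φ : G →* Multiplicative (X → ℤ) ⋊[permHom] Equiv.Perm X) (a b : G) :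
    piMap φ (a * b) = permAddAut ((φ b⁻¹).right) (piMap φ a) + piMap φ b := by
  funext i
  have e : permAddAut ((φ b⁻¹).right) (piMap φ a) i = piMap φ a ((φ b).right i) := by
    rw [map_inv]; rfl
  rw [Pi.add_apply, e, piMap_apply, piMap_apply, piMap_apply, map_mul, toAdd_mul_left,
    SemidirectProduct.mul_right, Equiv.Perm.mul_apply, Equiv.symm_apply_apply]

/-- The diagonal map is bijective: `f_x⁻¹(x) = u` iff `g_u(x) = u`. -/
theorem diag_iff (S : X × X → X × X) (hnd : Nondeg S) (hinv : Involutive S) (u x : X) :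
    fmap S x u = x ↔ gmap S u x = u := by
  constructor
  · intro h
    have h1 : S (u, x) = (gmap S u x, x) := Prod.ext rfl h
    have h2 := hinv (u, x)
    rw [h1] at h2
    apply (hnd x).1.1
    rw [h]
    exact congrArg Prod.snd h2
  · intro h
    have h1 : S (u, x) = (u, fmap S x u) := Prod.ext h rfl
    have h2 := hinv (u, x)
    rw [h1] at h2
    apply (hnd u).2.1
    rw [h]
    exact congrArg Prod.fst h2

/-- `f_u⁻¹(v) u = f_v⁻¹(u) v` in the structure group. -/
theorem swap_rel (S : X × X → X × X) (hnd : Nondeg S) (hinv : Involutive S) (u v : X) :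
    (PresentedGroup.of ((fPerm S (fun x => (hnd x).1) u).symm v) * PresentedGroup.of u :
      StructureGroup S) =
    PresentedGroup.of ((fPerm S (fun x => (hnd x).1) v).symm u) * PresentedGroup.of v := by
  obtain ⟨x, rfl⟩ := (fPerm S (fun x => (hnd x).1) u).surjective v
  have hv : fPerm S (fun x => (hnd x).1) u x = fmap S u x := rfl
  have h1 : fmap S (fmap S u x) (gmap S x u) = u := congrArg Prod.snd (hinv (x, u))
  have h2 : (fPerm S (fun x => (hnd x).1) (fmap S u x)).symm u = gmap S x u := by
    rw [Equiv.symm_apply_eq]; exact h1.symm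
  rw [Equiv.symm_apply_apply, hv, h2]
  have h3 : (PresentedGroup.mk (rels S)) (FreeGroup.of x * FreeGroup.of u *
      (FreeGroup.of (gmap S x u) * FreeGroup.of (fmap S u x))⁻¹) = 1 :=
    PresentedGroup.one_of_mem ⟨x, u, rfl⟩
  rw [map_mul, map_inv, map_mul, map_mul, mul_inv_eq_one] at h3
  exact h3

/-- The map `π : G(X,S) → ℤ^X` (the `ℤ^X`-component of `φ`) is a
bijection and satisfies the cocycle identity
`π(a₁a₂) = σ(a₂⁻¹)(π(a₁)) + π(a₂)`, where `σ(g)` is the `Sym(X)`-component of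
`φ(g)` acting on `ℤ^X` by permuting the basis. -/
theorem piMap_bijective_cocycle {X : Type*} [Fintype X] [DecidableEq X]
    (S : X × X → X × X)
    (hSbij : Function.Bijective S) (hnd : Nondeg S) (hinv : Involutive S)
    (hbr : Braided S)
    (φ : StructureGroup S →* Multiplicative (X → ℤ) ⋊[permHom] Equiv.Perm X)
    (hφ : ∀ x : X, φ (PresentedGroup.of x) = phiGen S (fun x => (hnd x).1) x) :
    Function.Bijective (piMap φ) ∧
    ∀ a₁ a₂ : StructureGroup S,
      piMap φ (a₁ * a₂) = permAddAut ((φ a₂⁻¹).right) (piMap φ a₁) + piMap φ a₂ := by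
  have hcoc := piMap_mul_s19 φ
  refine ⟨?_, hcoc⟩
  have hσ : ∀ x : X, (φ (PresentedGroup.of x)).right = (fPerm S (fun x => (hnd x).1) x)⁻¹ := by
    intro x; rw [hφ]; simp [phiGen]
  have hπ : ∀ x : X, piMap φ (PresentedGroup.of x) = Pi.single x 1 := by
    intro x
    funext i
    rw [piMap_apply, hφ, phiGen, toAdd_mul_left, SemidirectProduct.mul_right,
      SemidirectProduct.right_inl, SemidirectProduct.right_inr, mul_one,
      Equiv.symm_apply_apply, SemidirectProduct.left_inr, SemidirectProduct.left_inl]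
    simp [tvec]
  let T : X → StructureGroup S → StructureGroup S :=
    fun y a => PresentedGroup.of ((φ a).right y) * a
  have hTπ : ∀ y a, piMap φ (T y a) = Pi.single y 1 + piMap φ a := by
    intro y a
    change piMap φ (_ * a) = _
    rw [hcoc, hπ]
    congr 1
    funext i
    rw [map_inv]
    change (Pi.single ((φ a).right y) 1 : X → ℤ) ((φ a).right i) = _
    simp [Pi.single_apply]
  have hTbij : ∀ y, Function.Bijective (T y) := by
    intro y
    constructor
    · intro a b hab
      have key : ∀ a : StructureGroup S,
          gmap S ((φ (T y a)).right y) ((φ a).right y) = (φ (T y a)).right y := by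
        intro a
        rw [← diag_iff S hnd hinv]
        have : (φ (T y a)).right y =
            (fPerm S (fun x => (hnd x).1) ((φ a).right y)).symm ((φ a).right y) := by
          simp only [T, map_mul, SemidirectProduct.mul_right, hσ]
          rfl
        rw [this]
        exact (fPerm S (fun x => (hnd x).1) ((φ a).right y)).apply_symm_apply _
      have ha := key a
      rw [hab, ← key b] at ha
      have hxy : (φ a).right y = (φ b).right y := by
        apply (hnd ((φ (T y b)).right y)).2.1
        rw [key b] at ha
        rw [key b]
        exact ha
      have hab' : PresentedGroup.of ((φ a).right y) * a
        = PresentedGroup.of ((φ b).right y) * b := hab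
      rw [hxy] at hab'
      exact mul_left_cancel hab'
    · intro b
      obtain ⟨x, hx⟩ := (hnd ((φ b).right y)).2.2 ((φ b).right y)
      have hx' := (diag_iff S hnd hinv _ _).2 hx
      refine ⟨(PresentedGroup.of x)⁻¹ * b, ?_⟩
      have : (φ ((PresentedGroup.of x)⁻¹ * b)).right y = x := by
        rw [map_mul, map_inv, SemidirectProduct.mul_right, SemidirectProduct.inv_right, hσ,
          inv_inv]
        exact hx'
      simp only [T, this, mul_inv_cancel_left]
  let P : X → Equiv.Perm (StructureGroup S) := fun y => Equiv.ofBijective (T y) (hTbij y)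
  have hcomm : ∀ y z, Commute (P y) (P z) := by
    intro y z
    ext a
    change T y (T z a) = T z (T y a)
    have h := swap_rel S hnd hinv ((φ a).right z) ((φ a).right y)
    have e : ∀ y z, T y (T z a) = PresentedGroup.of
        ((fPerm S (fun x => (hnd x).1) ((φ a).right z)).symm ((φ a).right y)) *
        PresentedGroup.of ((φ a).right z) * a := by
      intro y z
      simp only [T, map_mul, SemidirectProduct.mul_right, hσ, mul_assoc]
      rfl
    rw [e, e, h]
  let Θ : (X → Multiplicative ℤ) →* Equiv.Perm (StructureGroup S) :=
    MonoidHom.noncommPiCoprod (fun y => zpowersHom _ (P y)) (by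
      intro y z _ m n
      simp only [zpowersHom_apply]
      exact (hcomm y z).zpow_zpow _ _)
  have hΘ : ∀ y, Θ (Pi.mulSingle y (Multiplicative.ofAdd 1)) = P y := by
    intro y
    have := MonoidHom.noncommPiCoprod_mulSingle (ϕ := fun y => zpowersHom _ (P y)) (hcomm := by
      intro y z _ m n
      simp only [zpowersHom_apply]
      exact (hcomm y z).zpow_zpow _ _) y (Multiplicative.ofAdd 1)
    refine this.trans ?_
    simp [zpowersHom_apply]
  let ψ : (X → ℤ) → StructureGroup S := fun w => Θ (fun i => Multiplicative.ofAdd (w i)) 1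
  have hψ : ∀ y w, ψ (Pi.single y 1 + w) = T y (ψ w) := by
    intro y w
    have : (fun i => Multiplicative.ofAdd ((Pi.single y 1 + w : X → ℤ) i)) =
        Pi.mulSingle y (Multiplicative.ofAdd 1) * (fun i => Multiplicative.ofAdd (w i)) := by
      funext i
      by_cases h : i = y
      · subst h; simp
      · simp [h]
    simp only [ψ]
    rw [this, map_mul, hΘ]
    rfl
  have h1 : piMap φ 1 = 0 := by
    funext i; simp [piMap]
  have step : ∀ x a, ψ (piMap φ (PresentedGroup.of x * a)) = PresentedGroup.of x * a ↔
      ψ (piMap φ a) = a := by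
    intro x a
    have : PresentedGroup.of x * a = T ((φ a).right⁻¹ x) a := by simp [T]
    rw [this, hTπ, hψ]
    exact (hTbij _).1.eq_iff
  have hleft : ∀ a, ψ (piMap φ a) = a := by
    intro a
    have hmem : a ∈ Subgroup.closure (Set.range (PresentedGroup.of (rels := rels S))) := by
      rw [PresentedGroup.closure_range_of]; trivial
    induction hmem using Subgroup.closure_induction_left with
    | one =>
      rw [h1]
      exact congrArg (fun p : Equiv.Perm (StructureGroup S) => p 1) (map_one Θ)
    | mul_left x hx y hy ih =>
      obtain ⟨x, rfl⟩ := hx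
      exact (step x y).2 ih
    | inv_mul_cancel x hx y hy ih =>
      obtain ⟨x, rfl⟩ := hx
      rw [← step x, mul_inv_cancel_left]
      exact ih
  refine ⟨Function.LeftInverse.injective hleft, ?_⟩
  let H : AddSubgroup (X → ℤ) :=
    { carrier := {w | ∀ v, v ∈ Set.range (piMap φ) ↔ w + v ∈ Set.range (piMap φ)}
      zero_mem' := by intro v; rw [zero_add]
      add_mem' := by
        intro a b ha hb v
        rw [hb v, ha, add_assoc]
      neg_mem' := by
        intro a ha v
        rw [ha (-a + v), add_neg_cancel_left] }
  have hs : ∀ y, (Pi.single y 1 : X → ℤ) ∈ H := by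
    intro y v
    constructor
    · rintro ⟨a, rfl⟩
      exact ⟨T y a, hTπ y a⟩
    · rintro ⟨b, hb⟩
      obtain ⟨a, rfl⟩ := (hTbij y).2 b
      rw [hTπ] at hb
      exact ⟨a, add_left_cancel hb⟩
  intro w
  have hw : w ∈ H := by
    have : w = ∑ y, w y • (Pi.single y 1 : X → ℤ) := by
      funext i
      simp [Finset.sum_apply, Pi.single_apply]
    rw [this]
    exact H.sum_mem fun y _ => H.zsmul_mem (hs y) _
  have := (hw 0).1 ⟨1, h1⟩
  rwa [add_zero] at this

end YB
end
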